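/- Let ρ ∈ M_m ⊗ M_n be a density matrix and fix 1 ≤ k ≤ min(m,n). Then R_k(ρ) = 2·E_{R,k}(ρ) + 1, where E_{R,k}(ρ) := inf{ s ≥ 0 : there exists a density matrix σ with SN(σ) ≤ k and SN((ρ + sσ)/(1+s)) ≤ k }. -/

import Mathlib

open scoped Kronecker ComplexOrder
open Matrix

namespace Ent

variable {ι κ : Type*} [Fintype ι] [Fintype κ]

/-- Inner product ⟨v,w⟩ = Σᵢ conj(v i) * (w i) (conjugate-linear in the first argument). -/
noncomputable def vinner (v w : ι → ℂ) : ℂ := dotProduct (star v) w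

/-- An elementary (product) tensor a ⊗ b in ℂ^ι ⊗ ℂ^κ. -/
def prodVec (a : ι → ℂ) (b : κ → ℂ) : ι × κ → ℂ := fun p => a p.1 * b p.2

/-- `v` has Schmidt rank at most `k`. -/
def SchmidtRankLE (k : ℕ) (v : ι × κ → ℂ) : Prop :=
  ∃ (a : Fin k → ι → ℂ) (b : Fin k → κ → ℂ), v = ∑ i, prodVec (a i) (b i)

/-- The rank-one operator |v⟩⟨w|. -/
noncomputable def ketBra (v : ι → ℂ) (w : κ → ℂ) : Matrix ι κ ℂ :=
  Matrix.vecMulVec v (star w)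

/-- A finite family of vectors is orthonormal. -/
def Orthonormal' {N : Type*} [DecidableEq N] (v : N → ι → ℂ) : Prop :=
  ∀ i j, vinner (v i) (v j) = if i = j then 1 else 0

/-- The S(k)-norm of `X ∈ M_ι ⊗ M_κ`. -/
noncomputable def SkNorm (k : ℕ) (X : Matrix (ι × κ) (ι × κ) ℂ) : ℝ :=
  sSup { r | ∃ v w : ι × κ → ℂ, vinner v v = 1 ∧ vinner w w = 1 ∧
    SchmidtRankLE k v ∧ SchmidtRankLE k w ∧
    r = ‖vinner v (X.mulVec w)‖ }

/-- The product numerical radius r_k^⊗. -/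
noncomputable def prodRad (k : ℕ) (Y : Matrix (ι × κ) (ι × κ) ℂ) : ℝ :=
  sSup { r | ∃ v : ι × κ → ℂ, vinner v v = 1 ∧ SchmidtRankLE k v ∧
    r = ‖vinner v (Y.mulVec v)‖ }

/-- The norm ‖·‖_{γ,k}. -/
noncomputable def gammaNorm (k : ℕ) (X : Matrix (ι × κ) (ι × κ) ℂ) : ℝ :=
  sInf { r | ∃ (N : ℕ) (c : Fin N → ℂ) (v w : Fin N → (ι × κ → ℂ)),
    (∀ i, vinner (v i) (v i) = 1 ∧ vinner (w i) (w i) = 1 ∧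
      SchmidtRankLE k (v i) ∧ SchmidtRankLE k (w i)) ∧
    X = ∑ i, c i • ketBra (v i) (w i) ∧
    r = ∑ i, ‖c i‖ }

/-- `ρ` is a density matrix. -/
def IsDensity (ρ : Matrix ι ι ℂ) : Prop := ρ.PosSemidef ∧ ρ.trace = 1

/-- `ρ` has Schmidt number at most `k`: it is a convex combination of projections onto
unit vectors of Schmidt rank at most `k`. -/
def SchmidtNumLE (k : ℕ) (ρ : Matrix (ι × κ) (ι × κ) ℂ) : Prop :=
  ∃ (N : ℕ) (p : Fin N → ℝ) (v : Fin N → (ι × κ → ℂ)),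
    (∀ i, 0 ≤ p i ∧ vinner (v i) (v i) = 1 ∧ SchmidtRankLE k (v i)) ∧
    (∑ i, p i) = 1 ∧ ρ = ∑ i, p i • ketBra (v i) (v i)

/-- The robustness norm R_k on Hermitian operators. -/
noncomputable def Rk (k : ℕ) (Y : Matrix (ι × κ) (ι × κ) ℂ) : ℝ :=
  sInf { r | ∃ (c₁ c₂ : ℝ) (ρ₁ ρ₂ : Matrix (ι × κ) (ι × κ) ℂ),
    0 ≤ c₁ ∧ 0 ≤ c₂ ∧ IsDensity ρ₁ ∧ IsDensity ρ₂ ∧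
    SchmidtNumLE k ρ₁ ∧ SchmidtNumLE k ρ₂ ∧
    Y = c₁ • ρ₁ - c₂ • ρ₂ ∧ r = c₁ + c₂ }

/-- `Y` is k-block positive: ⟨v|Y|v⟩ ≥ 0 for every unit vector of Schmidt rank at most `k`. -/
def KBlockPos (k : ℕ) (Y : Matrix (ι × κ) (ι × κ) ℂ) : Prop :=
  ∀ v : ι × κ → ℂ, vinner v v = 1 → SchmidtRankLE k v →
    0 ≤ (vinner v (Y.mulVec v)).re

/-- Dual of a norm on matrices, w.r.t. the Hilbert–Schmidt inner product ⟨W,X⟩ = Tr(Wᴴ X). -/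
noncomputable def dualNormM (f : Matrix ι κ ℂ → ℝ) (X : Matrix ι κ ℂ) : ℝ :=
  sSup { r | ∃ W : Matrix ι κ ℂ, f W ≤ 1 ∧ r = ‖(Wᴴ * X).trace‖ }

/-- Dual of a norm, computed in the real Hilbert space of Hermitian matrices with the
Hilbert–Schmidt inner product ⟨W,Y⟩ = Tr(WY). -/
noncomputable def dualNormHerm (f : Matrix ι ι ℂ → ℝ) (Y : Matrix ι ι ℂ) : ℝ :=
  sSup { r | ∃ W : Matrix ι ι ℂ, W.IsHermitian ∧ f W ≤ 1 ∧ r = |((W * Y).trace).re| }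

/-- The Frobenius norm of a matrix. -/
noncomputable def frobNorm (X : Matrix ι κ ℂ) : ℝ :=
  Real.sqrt (∑ i, ∑ j, Complex.normSq (X i j))

/-- The (k,2)-norm: ‖X‖_{(k,2)} = sup { |Tr(XY)| : rank Y ≤ k, ‖Y‖_F ≤ 1 }. -/
noncomputable def kNorm (k : ℕ) (X : Matrix ι κ ℂ) : ℝ :=
  sSup { r | ∃ Y : Matrix κ ι ℂ, Y.rank ≤ k ∧ frobNorm Y ≤ 1 ∧
    r = ‖(X * Y).trace‖ }

/-- The trace norm: the sum of the singular values, i.e. of the square roots of the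
eigenvalues of Xᴴ X. -/
noncomputable def traceNorm [DecidableEq κ] (X : Matrix ι κ ℂ) : ℝ :=
  ∑ i, Real.sqrt ((Matrix.isHermitian_conjTranspose_mul_self X).eigenvalues i)

/-- The s(k) vector norm: sup of |⟨u,w⟩| over unit vectors u of Schmidt rank at most k. -/
noncomputable def skVecNorm (k : ℕ) (w : ι × κ → ℂ) : ℝ :=
  sSup { r | ∃ u : ι × κ → ℂ, vinner u u = 1 ∧ SchmidtRankLE k u ∧
    r = ‖vinner u w‖ }

/-- Dual of a norm on vectors. -/
noncomputable def dualNormV (f : (ι × κ → ℂ) → ℝ) (v : ι × κ → ℂ) : ℝ :=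
  sSup { r | ∃ w : ι × κ → ℂ, f w ≤ 1 ∧ r = ‖vinner w v‖ }

/-- The realignment map, L(X)_{(i,k),(j,l)} = X_{(i,j),(k,l)}. -/
def realign {m n : ℕ} (X : Matrix (Fin m × Fin n) (Fin m × Fin n) ℂ) :
    Matrix (Fin m × Fin m) (Fin n × Fin n) ℂ :=
  fun p q => X (p.1, q.1) (p.2, q.2)

/-- The projective tensor norm on M_{m,n} ⊗ M_{m,n}. -/
noncomputable def projNorm {m n : ℕ} (Z : Matrix (Fin m × Fin m) (Fin n × Fin n) ℂ) : ℝ :=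
  sInf { r | ∃ (N : ℕ) (A B : Fin N → Matrix (Fin m) (Fin n) ℂ),
    Z = ∑ i, A i ⊗ₖ B i ∧ r = ∑ i, traceNorm (A i) * traceNorm (B i) }


/-- The robustness of Schmidt number `k`: the least `s ≥ 0` such that mixing `ρ` with `s` parts
of some state of Schmidt number at most `k` yields a state of Schmidt number at most `k`. -/
noncomputable def ERk {ι κ : Type*} [Fintype ι] [Fintype κ] (k : ℕ)
    (ρ : Matrix (ι × κ) (ι × κ) ℂ) : ℝ :=
  sInf { s : ℝ | 0 ≤ s ∧ ∃ τ : Matrix (ι × κ) (ι × κ) ℂ, IsDensity τ ∧ SchmidtNumLE k τ ∧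
    SchmidtNumLE k ((1 + s)⁻¹ • (ρ + s • τ)) }

/-!
Comparing traces, a decomposition `ρ = c₁ρ₁ - c₂ρ₂` of a trace-one matrix has `c₁ = 1 + c₂`, so it
says exactly that mixing `ρ` with `c₂` parts of `ρ₂` yields `ρ₁`. Hence the values `c₁ + c₂`
minimised by `R_k` are the numbers `2s + 1` with `s` admissible for `E_{R,k}`, and `s ↦ 2s + 1`
commutes with the infimum once an admissible `s` exists. For this, projections `|v⟩⟨v|` span the
complex matrices by polarization, so their Kronecker products, which are the projections onto
product vectors, span `M_ι ⊗ M_κ`. Taking real parts, every Hermitian matrix is a real combination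
of such projections, and collecting the positive and the negative coefficients writes it as a
difference of multiples of two points of the convex set of states of Schmidt number at most `k`.
-/

section Span

open scoped ComplexStarModule
open Submodule

lemma exists_smul_sub_smul_of_mem_span {E : Type*} [AddCommGroup E] [Module ℝ E] {s : Set E}
    (hconv : Convex ℝ s) (hne : s.Nonempty) {x : E} (hx : x ∈ span ℝ s) :
    ∃ a b : ℝ, 0 ≤ a ∧ 0 ≤ b ∧ ∃ y ∈ s, ∃ z ∈ s, x = a • y - b • z := by
  induction hx using span_induction with
  | mem x hx => exact ⟨1, 0, zero_le_one, le_rfl, x, hx, x, hx, by simp⟩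
  | zero =>
    obtain ⟨y, hy⟩ := hne
    exact ⟨0, 0, le_rfl, le_rfl, y, hy, y, hy, by simp⟩
  | add x x' _ _ ihx ihx' =>
    obtain ⟨a, b, ha, hb, y, hy, z, hz, rfl⟩ := ihx
    obtain ⟨a', b', ha', hb', y', hy', z', hz', rfl⟩ := ihx'
    obtain ⟨u, hu, hyu⟩ := hconv.exists_mem_add_smul_eq hy hy' ha ha'
    obtain ⟨w, hw, hzw⟩ := hconv.exists_mem_add_smul_eq hz hz' hb hb'
    exact ⟨a + a', b + b', by positivity, by positivity, u, hu, w, hw,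
      by rw [hyu, hzw, sub_add_sub_comm]⟩
  | smul c x _ ihx =>
    obtain ⟨a, b, ha, hb, y, hy, z, hz, rfl⟩ := ihx
    rcases le_total 0 c with hc | hc
    · exact ⟨c * a, c * b, by positivity, by positivity, y, hy, z, hz,
        by rw [smul_sub, mul_smul, mul_smul]⟩
    · refine ⟨-c * b, -c * a, mul_nonneg (neg_nonneg.2 hc) hb, mul_nonneg (neg_nonneg.2 hc) ha,
        z, hz, y, hy, ?_⟩
      module

lemma realPart_imaginaryPart_mem_span_real {A : Type*} [AddCommGroup A] [Module ℂ A]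
    [StarAddMonoid A] [StarModule ℂ A] {s : Set A} (hs : ∀ a ∈ s, IsSelfAdjoint a) {x : A}
    (hx : x ∈ span ℂ s) : (ℜ x : A) ∈ span ℝ s ∧ (ℑ x : A) ∈ span ℝ s := by
  induction hx using span_induction with
  | mem x hx =>
    rw [(hs x hx).coe_realPart, (hs x hx).imaginaryPart]
    exact ⟨subset_span hx, zero_mem _⟩
  | zero => simp
  | add x y _ _ ihx ihy =>
    simp only [map_add, AddSubgroup.coe_add]
    exact ⟨add_mem ihx.1 ihy.1, add_mem ihx.2 ihy.2⟩
  | smul c x _ ihx =>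
    rw [realPart_smul, imaginaryPart_smul]
    exact ⟨sub_mem (smul_mem _ _ ihx.1) (smul_mem _ _ ihx.2),
      add_mem (smul_mem _ _ ihx.2) (smul_mem _ _ ihx.1)⟩

lemma mem_span_real_of_isSelfAdjoint {A : Type*} [AddCommGroup A] [Module ℂ A]
    [StarAddMonoid A] [StarModule ℂ A] {s : Set A} (hs : ∀ a ∈ s, IsSelfAdjoint a) {x : A}
    (hxs : x ∈ span ℂ s) (hx : IsSelfAdjoint x) : x ∈ span ℝ s :=
  hx.coe_realPart ▸ (realPart_imaginaryPart_mem_span_real hs hxs).1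

lemma span_image2_kronecker_eq_top {R l m n p : Type*} [CommSemiring R] [Finite l] [Finite m]
    [Finite n] [Finite p] {s : Set (Matrix l m R)} {t : Set (Matrix n p R)}
    (hs : span R s = ⊤) (ht : span R t = ⊤) :
    span R (Set.image2 (fun A B ↦ A ⊗ₖ B) s t) = ⊤ := by
  classical
  cases nonempty_fintype l
  cases nonempty_fintype m
  cases nonempty_fintype n
  cases nonempty_fintype p
  have htmul : span R (Set.image2 (fun A B ↦ A ⊗ₜ[R] B) s t) = ⊤ := by
    rw [← TensorProduct.map₂_mk_top_top_eq_top, ← hs, ← ht, map₂_span_span]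
    rfl
  have himage := congrArg (map (kroneckerLinearEquiv l m n p R).toLinearMap) htmul
  rw [map_span, Set.image_image2, Submodule.map_top, LinearEquiv.range] at himage
  exact himage

end Span

section KetBra

variable {α α' β β' : Type*}

lemma ketBra_smul_self (c : ℝ) (v : α → ℂ) : ketBra (c • v) (c • v) = c ^ 2 • ketBra v v := by
  simp [ketBra, smul_vecMulVec, vecMulVec_smul, smul_smul, sq]

lemma isSelfAdjoint_ketBra_self (v : α → ℂ) : IsSelfAdjoint (ketBra v v) := by
  simp [isSelfAdjoint_iff, star_eq_conjTranspose, ketBra, conjTranspose_vecMulVec]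

lemma ketBra_kronecker_ketBra (a : α → ℂ) (a' : α' → ℂ) (b : β → ℂ) (b' : β' → ℂ) :
    ketBra a a' ⊗ₖ ketBra b b' = ketBra (prodVec a b) (prodVec a' b') := by
  ext ⟨i, j⟩ ⟨i', j'⟩
  simp only [kronecker_apply, ketBra, vecMulVec_apply, prodVec, Pi.star_apply, star_mul']
  ring

lemma smul_ketBra_add_smul_self {z : ℂ} (hz : z * star z = 1) (v w : α → ℂ) :
    z • ketBra (v + z • w) (v + z • w) =
      z • (ketBra v v + ketBra w w) + z ^ 2 • ketBra w v + ketBra v w := by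
  ext i j
  simp only [ketBra, vecMulVec_apply, Matrix.smul_apply, Matrix.add_apply, Pi.add_apply,
    Pi.smul_apply, Pi.star_apply, star_add, star_smul, smul_eq_mul]
  linear_combination (v i * star (w j) + z * w i * star (w j)) * hz

lemma four_smul_ketBra (v w : α → ℂ) :
    (4 : ℂ) • ketBra v w = ∑ t ∈ Finset.range 4, Complex.I ^ t •
      ketBra (v + Complex.I ^ t • w) (v + Complex.I ^ t • w) := by
  have hunit (t : ℕ) : Complex.I ^ t * star (Complex.I ^ t) = 1 := by
    simp [← mul_pow]
  have hsum : ∑ t ∈ Finset.range 4, Complex.I ^ t = 0 := by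
    simp [Finset.sum_range_succ, Complex.I_pow_three]
  have hsum_sq : ∑ t ∈ Finset.range 4, (Complex.I ^ t) ^ 2 = 0 := by
    simp [Finset.sum_range_succ, Complex.I_pow_three]
  simp only [smul_ketBra_add_smul_self (hunit _), Finset.sum_add_distrib, ← Finset.sum_smul, hsum,
    hsum_sq, zero_smul, zero_add, Finset.sum_const, Finset.card_range]
  module

lemma ketBra_mem_span_ketBra_self (v w : α → ℂ) :
    ketBra v w ∈ Submodule.span ℂ (Set.range fun u : α → ℂ ↦ ketBra u u) := by
  rw [← Submodule.smul_mem_iff _ (four_ne_zero : (4 : ℂ) ≠ 0), four_smul_ketBra]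
  exact Submodule.sum_mem _ fun t _ ↦
    Submodule.smul_mem _ _ (Submodule.subset_span ⟨_, rfl⟩)

lemma span_ketBra_self_eq_top [Finite α] :
    Submodule.span ℂ (Set.range fun u : α → ℂ ↦ ketBra u u) = ⊤ := by
  classical
  cases nonempty_fintype α
  refine Submodule.eq_top_iff'.2 fun A ↦ ?_
  rw [matrix_eq_sum_single A]
  refine Submodule.sum_mem _ fun i _ ↦ Submodule.sum_mem _ fun j _ ↦ ?_
  have hsingle : single i j (A i j) = A i j • ketBra (Pi.single i 1) (Pi.single j 1) := by
    rw [ketBra, Pi.star_single, star_one, ← single_eq_single_vecMulVec_single, smul_single,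
      smul_eq_mul, mul_one]
  rw [hsingle]
  exact Submodule.smul_mem _ _ (ketBra_mem_span_ketBra_self _ _)

end KetBra

lemma trace_ketBra_self (v : ι → ℂ) : (ketBra v v).trace = vinner v v := by
  rw [ketBra, trace_vecMulVec, dotProduct_comm, vinner]

lemma vinner_self_eq_norm_sq (v : ι → ℂ) :
    vinner v v = ((‖WithLp.toLp 2 v‖ ^ 2 : ℝ) : ℂ) := by
  simp [vinner, dotProduct, EuclideanSpace.norm_sq_eq, Complex.conj_mul']

lemma vinner_smul_self (c : ℝ) (v : ι → ℂ) :
    vinner (c • v) (c • v) = (c ^ 2 : ℝ) * vinner v v := by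
  simp [vinner, sq, mul_assoc]

section SchmidtRank

variable {α β : Type*} {k : ℕ}

lemma SchmidtRankLE.smul {R : Type*} [DistribSMul R ℂ] [IsScalarTower R ℂ ℂ] {v : α × β → ℂ}
    (hv : SchmidtRankLE k v) (c : R) :
    SchmidtRankLE k (c • v) := by
  obtain ⟨a, b, rfl⟩ := hv
  refine ⟨fun i ↦ c • a i, b, ?_⟩
  ext x
  simp [prodVec, Finset.smul_sum, smul_mul_assoc]

lemma schmidtRankLE_prodVec (hk : 1 ≤ k) (a : α → ℂ) (b : β → ℂ) :
    SchmidtRankLE k (prodVec a b) := by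
  refine ⟨Pi.single ⟨0, hk⟩ a, fun _ ↦ b, ?_⟩
  ext x
  simp [prodVec, Pi.single_apply, ite_apply]

end SchmidtRank

/-- The pure states of Schmidt rank at most `k`: the projections `|v⟩⟨v|` onto unit vectors `v` with
`SR(v) ≤ k`. They generate the states of Schmidt number at most `k` as their convex hull. -/
def pureStates (ι κ : Type*) [Fintype ι] [Fintype κ] (k : ℕ) :
    Set (Matrix (ι × κ) (ι × κ) ℂ) :=
  {P | ∃ v : ι × κ → ℂ, vinner v v = 1 ∧ SchmidtRankLE k v ∧ ketBra v v = P}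

/-- The costs `c₁ + c₂` of the decompositions `ρ = c₁ρ₁ - c₂ρ₂` into states of Schmidt number at
most `k`, so that `R_k(ρ)` is the infimum of this set. -/
def decompositionCosts (k : ℕ) (ρ : Matrix (ι × κ) (ι × κ) ℂ) : Set ℝ :=
  {r | ∃ (c₁ c₂ : ℝ) (ρ₁ ρ₂ : Matrix (ι × κ) (ι × κ) ℂ),
    0 ≤ c₁ ∧ 0 ≤ c₂ ∧ IsDensity ρ₁ ∧ IsDensity ρ₂ ∧
    SchmidtNumLE k ρ₁ ∧ SchmidtNumLE k ρ₂ ∧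
    ρ = c₁ • ρ₁ - c₂ • ρ₂ ∧ r = c₁ + c₂}

/-- The weights `s` for which mixing `ρ` with `s` parts of some state of Schmidt number at most `k`
yields another such state, so that `E_{R,k}(ρ)` is the infimum of this set. -/
def mixingWeights (k : ℕ) (ρ : Matrix (ι × κ) (ι × κ) ℂ) : Set ℝ :=
  {s | 0 ≤ s ∧ ∃ τ : Matrix (ι × κ) (ι × κ) ℂ, IsDensity τ ∧ SchmidtNumLE k τ ∧
    SchmidtNumLE k ((1 + s)⁻¹ • (ρ + s • τ))}

section SchmidtNumber

variable {k : ℕ} {ρ : Matrix (ι × κ) (ι × κ) ℂ}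

lemma schmidtNumLE_iff_mem_convexHull :
    SchmidtNumLE k ρ ↔ ρ ∈ convexHull ℝ (pureStates ι κ k) := by
  constructor
  · rintro ⟨N, p, v, hv, hp, rfl⟩
    exact mem_convexHull_of_exists_fintype p (fun i ↦ ketBra (v i) (v i)) (fun i ↦ (hv i).1) hp
      (fun i ↦ ⟨v i, (hv i).2.1, (hv i).2.2, rfl⟩) rfl
  · intro hρ
    obtain ⟨J, _, p, P, hp₀, hp₁, hP, rfl⟩ := mem_convexHull_iff_exists_fintype.1 hρ
    choose v hunit hrank hvP using hP
    let e := (Fintype.equivFin J).symm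
    refine ⟨Fintype.card J, p ∘ e, v ∘ e, fun i ↦ ⟨hp₀ _, hunit _, hrank _⟩, ?_, ?_⟩
    · rw [← hp₁]
      exact e.sum_comp p
    · simp only [← hvP]
      exact (e.sum_comp fun j ↦ p j • ketBra (v j) (v j)).symm

lemma SchmidtNumLE.isDensity (hρ : SchmidtNumLE k ρ) : IsDensity ρ := by
  obtain ⟨N, p, v, hv, hp, rfl⟩ := hρ
  refine ⟨posSemidef_sum _ fun i _ ↦ (posSemidef_vecMulVec_self_star (v i)).smul (hv i).1, ?_⟩
  simp only [trace_sum, trace_smul, trace_ketBra_self, (hv _).2.1, Complex.real_smul, mul_one]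
  exact_mod_cast hp

lemma ketBra_self_mem_span_pureStates {v : ι × κ → ℂ} (hv : SchmidtRankLE k v) :
    ketBra v v ∈ Submodule.span ℝ (pureStates ι κ k) := by
  rcases eq_or_ne v 0 with rfl | hv0
  · simp [ketBra]
  · set r : ℝ := ‖WithLp.toLp 2 v‖
    have hr : r ≠ 0 := by simpa [r] using hv0
    have hunit : vinner (r⁻¹ • v) (r⁻¹ • v) = 1 := by
      rw [vinner_smul_self, vinner_self_eq_norm_sq, ← Complex.ofReal_mul, ← mul_pow,
        inv_mul_cancel₀ hr, one_pow, Complex.ofReal_one]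
    have hscale : ketBra v v = r ^ 2 • ketBra (r⁻¹ • v) (r⁻¹ • v) := by
      rw [ketBra_smul_self, smul_smul, ← mul_pow, mul_inv_cancel₀ hr, one_pow, one_smul]
    rw [hscale]
    exact Submodule.smul_mem _ _ (Submodule.subset_span ⟨_, hunit, hv.smul _, rfl⟩)

lemma mem_span_pureStates_of_isHermitian (hk : 1 ≤ k) (hρ : ρ.IsHermitian) :
    ρ ∈ Submodule.span ℝ (pureStates ι κ k) := by
  let productProjections : Set (Matrix (ι × κ) (ι × κ) ℂ) := Set.image2 (fun A B ↦ A ⊗ₖ B)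
    (Set.range fun a : ι → ℂ ↦ ketBra a a) (Set.range fun b : κ → ℂ ↦ ketBra b b)
  have hspan : ρ ∈ Submodule.span ℂ productProjections := by
    rw [span_image2_kronecker_eq_top span_ketBra_self_eq_top span_ketBra_self_eq_top]
    exact Submodule.mem_top
  have hsa : ∀ P ∈ productProjections, IsSelfAdjoint P := by
    rintro _ ⟨_, ⟨a, rfl⟩, _, ⟨b, rfl⟩, rfl⟩
    simpa only [ketBra_kronecker_ketBra] using isSelfAdjoint_ketBra_self (prodVec a b)
  refine Submodule.span_le.2 ?_ (mem_span_real_of_isSelfAdjoint hsa hspan hρ)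
  rintro _ ⟨_, ⟨a, rfl⟩, _, ⟨b, rfl⟩, rfl⟩
  simpa only [ketBra_kronecker_ketBra, SetLike.mem_coe] using
    ketBra_self_mem_span_pureStates (schmidtRankLE_prodVec hk a b)

lemma decompositionCosts_nonempty (hk : 1 ≤ k) (hρ : ρ.IsHermitian) (hρ0 : ρ ≠ 0) :
    (decompositionCosts k ρ).Nonempty := by
  have hspan := mem_span_pureStates_of_isHermitian hk hρ
  have hne : (pureStates ι κ k).Nonempty := by
    by_contra! hempty
    rw [hempty, Submodule.span_empty, Submodule.mem_bot] at hspan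
    exact hρ0 hspan
  obtain ⟨c₁, c₂, hc₁, hc₂, ρ₁, hρ₁, ρ₂, hρ₂, hdecomp⟩ :=
    exists_smul_sub_smul_of_mem_span (convex_convexHull ℝ _) hne.convexHull
      (Submodule.span_mono (subset_convexHull ℝ _) hspan)
  rw [← schmidtNumLE_iff_mem_convexHull] at hρ₁ hρ₂
  exact ⟨_, c₁, c₂, ρ₁, ρ₂, hc₁, hc₂, hρ₁.isDensity, hρ₂.isDensity, hρ₁, hρ₂, hdecomp, rfl⟩

lemma eq_one_add_of_eq_smul_sub_smul {ρ ρ₁ ρ₂ : Matrix ι ι ℂ} {c₁ c₂ : ℝ} (hρ : ρ.trace = 1)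
    (hρ₁ : ρ₁.trace = 1) (hρ₂ : ρ₂.trace = 1) (hdecomp : ρ = c₁ • ρ₁ - c₂ • ρ₂) :
    c₁ = 1 + c₂ := by
  have htrace : (1 : ℂ) = c₁ - c₂ := by
    simpa [trace_sub, trace_smul, hρ, hρ₁, hρ₂] using congrArg trace hdecomp
  have : (1 : ℝ) = c₁ - c₂ := by exact_mod_cast htrace
  linarith

lemma mem_mixingWeights_iff {s : ℝ} :
    s ∈ mixingWeights k ρ ↔ 0 ≤ s ∧ ∃ ρ₁ ρ₂, SchmidtNumLE k ρ₁ ∧ SchmidtNumLE k ρ₂ ∧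
      ρ = (1 + s) • ρ₁ - s • ρ₂ := by
  refine and_congr_right fun hs ↦ ?_
  have hs1 : 1 + s ≠ 0 := by positivity
  constructor
  · rintro ⟨τ, -, hτ, hmix⟩
    exact ⟨_, τ, hmix, hτ, by rw [smul_inv_smul₀ hs1, add_sub_cancel_right]⟩
  · rintro ⟨ρ₁, ρ₂, hρ₁, hρ₂, rfl⟩
    exact ⟨ρ₂, hρ₂.isDensity, hρ₂, by rwa [sub_add_cancel, inv_smul_smul₀ hs1]⟩

lemma decompositionCosts_eq_image_mixingWeights (hρ : ρ.trace = 1) :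
    decompositionCosts k ρ = (fun s ↦ 2 * s + 1) '' mixingWeights k ρ := by
  ext r
  constructor
  · rintro ⟨c₁, c₂, ρ₁, ρ₂, -, hc₂, hd₁, hd₂, hρ₁, hρ₂, hdecomp, rfl⟩
    obtain rfl : c₁ = 1 + c₂ := eq_one_add_of_eq_smul_sub_smul hρ hd₁.2 hd₂.2 hdecomp
    exact ⟨c₂, mem_mixingWeights_iff.2 ⟨hc₂, ρ₁, ρ₂, hρ₁, hρ₂, hdecomp⟩, by ring⟩
  · rintro ⟨s, hs, rfl⟩
    obtain ⟨hs0, ρ₁, ρ₂, hρ₁, hρ₂, hdecomp⟩ := mem_mixingWeights_iff.1 hs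
    exact ⟨1 + s, s, ρ₁, ρ₂, by positivity, hs0, hρ₁.isDensity, hρ₂.isDensity, hρ₁, hρ₂, hdecomp,
      by ring⟩

theorem Rk_eq_two_ERk_add_one_general (hk : 1 ≤ k) (hherm : ρ.IsHermitian) (htrace : ρ.trace = 1) :
    Rk k ρ = 2 * ERk k ρ + 1 := by
  have hρ0 : ρ ≠ 0 := by
    rintro rfl
    simp at htrace
  have himage := decompositionCosts_eq_image_mixingWeights (k := k) htrace
  have hne : (mixingWeights k ρ).Nonempty :=
    Set.image_nonempty.1 (himage ▸ decompositionCosts_nonempty hk hherm hρ0)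
  have hbdd : BddBelow (mixingWeights k ρ) := ⟨0, fun _ hs ↦ hs.1⟩
  have hmono : Monotone fun s : ℝ ↦ 2 * s + 1 := fun _ _ _ ↦ by dsimp only; gcongr
  calc Rk k ρ = sInf (decompositionCosts k ρ) := rfl
    _ = sInf ((fun s ↦ 2 * s + 1) '' mixingWeights k ρ) := by rw [himage]
    _ = 2 * sInf (mixingWeights k ρ) + 1 :=
      (hmono.map_csInf_of_continuousAt (by fun_prop) hne hbdd).symm
    _ = 2 * ERk k ρ + 1 := rfl

end SchmidtNumber

/-- for a density matrix `ρ`, `R_k(ρ) = 2·E_{R,k}(ρ) + 1`. -/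
theorem Rk_eq_two_ERk_add_one {m n k : ℕ} (hk1 : 1 ≤ k) (hk : k ≤ min m n)
    (ρ : Matrix (Fin m × Fin n) (Fin m × Fin n) ℂ) (hρ : IsDensity ρ) :
    Rk k ρ = 2 * ERk k ρ + 1 :=
  Rk_eq_two_ERk_add_one_general hk1 hρ.1.isHermitian hρ.2

end Ent
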